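/- arXiv:1811.04649 — 9 statements merged into one kernel-verified Lean document; each statement's English description precedes it below -/
import Mathlib

section
/- Let A be a unital associative algebra over ℂ, let θ be a ℂ-algebra automorphism of A with θ² = id, and let W be a simple left A-module such that the twisted module W∘θ is not isomorphic to W as an A-module. Then W, regarded as a module over the fixed subalgebra A^θ = {a ∈ A : θ(a) = a} by restriction of the action, is a simple A^θ-module. -/
/-- The fixed-point subalgebra `A^g = {a ∈ A : g(a) = a}` of a `ℂ`-algebra automorphism. -/
def fixedSubalgebra {A : Type*} [Ring A] [Algebra ℂ A] (g : A ≃ₐ[ℂ] A) : Subalgebra ℂ A :=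
  AlgHom.equalizer g.toAlgHom (AlgHom.id ℂ A)

/-- Let `θ` be an order-two `ℂ`-algebra automorphism of `A` and `W` a
simple `A`-module with `W ∘ θ ≇ W`. Then `W` is simple over the fixed subalgebra `A^θ`. -/
theorem simple_over_fixed_subalgebra_of_order_two
    (A : Type*) [Ring A] [Algebra ℂ A]
    (θ : A ≃ₐ[ℂ] A) (hθ : θ ^ 2 = 1)
    (W : Type*) [AddCommGroup W] [Module A W]
    (hW : IsSimpleModule A W)
    (hnoniso : ¬ ∃ f : W ≃+ W, ∀ (a : A) (w : W), f (θ a • w) = a • f w) :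
    IsSimpleModule (fixedSubalgebra θ) W := by
  have hθθ : ∀ a, θ (θ a) = a := fun a => by
    have h := congrArg (fun g : A ≃ₐ[ℂ] A => g a) hθ
    simpa [pow_two] using h
  have hgen : ∀ w : W, w ≠ 0 → ∀ v : W, ∃ a : A, a • w = v := by
    intro w hw v
    exact IsSimpleModule.toSpanSingleton_surjective A hw v
  have key : ∀ w : W, w ≠ 0 → ∀ v : W, ∃ a : fixedSubalgebra θ, a • w = v := by
    intro w hw v
    let N : Submodule A W :=
      { carrier := {u | ∃ a : A, a • w = u ∧ θ a • w = 0}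
        add_mem' := by
          rintro _ _ ⟨a, rfl, ha⟩ ⟨b, rfl, hb⟩
          exact ⟨a + b, add_smul _ _ _, by rw [map_add, add_smul, ha, hb, add_zero]⟩
        zero_mem' := ⟨0, by simp, by simp⟩
        smul_mem' := by
          rintro c _ ⟨a, rfl, ha⟩
          exact ⟨c * a, mul_smul _ _ _, by rw [map_mul, mul_smul, ha, smul_zero]⟩ }
    rcases eq_bot_or_eq_top N with hN | hN
    · exfalso
      have h0 : ∀ a : A, θ a • w = 0 → a • w = 0 := by
        intro a ha
        have : a • w ∈ N := ⟨a, rfl, ha⟩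
        rw [hN] at this
        simpa using this
      have h1 : ∀ a b : A, a • w = b • w → θ a • w = θ b • w := by
        intro a b hab
        have := h0 (θ (a - b)) (by rw [hθθ, sub_smul, hab, sub_self])
        rwa [map_sub, sub_smul, sub_eq_zero] at this
      choose g hg using hgen w hw
      have hf : ∀ a : A, θ (g (a • w)) • w = θ a • w := fun a => h1 _ _ (hg _)
      have hinv : ∀ v, θ (g (θ (g v) • w)) • w = v := by
        intro v
        rw [hf, hθθ, hg]
      apply hnoniso
      refine ⟨{ toFun := fun v => θ (g v) • w
                invFun := fun v => θ (g v) • w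
                left_inv := hinv
                right_inv := hinv
                map_add' := ?_ }, ?_⟩
      · intro x y
        rw [← add_smul, ← map_add]
        apply h1
        rw [hg, add_smul, hg, hg]
      · intro a x
        change θ (g (θ a • x)) • w = a • θ (g x) • w
        have : θ (g (θ a • x)) • w = θ (θ a * g x) • w := by
          apply h1
          rw [hg, mul_smul, hg]
        rw [this, map_mul, hθθ, mul_smul]
    · have hv : v ∈ N := by rw [hN]; trivial
      obtain ⟨a, ha, ha'⟩ := hv
      refine ⟨⟨a + θ a, ?_⟩, ?_⟩
      · change θ (a + θ a) = a + θ a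
        rw [map_add, hθθ, add_comm]
      · change (a + θ a) • w = v
        rw [add_smul, ha, ha', add_zero]
  have : Nontrivial W := IsSimpleModule.nontrivial A W
  rw [isSimpleModule_iff_toSpanSingleton_surjective]
  exact ⟨this, fun w hw v => key w hw v⟩
end

section
/- Let A be a unital associative algebra over ℂ, let p ≥ 1 be an integer, and let g be a ℂ-algebra automorphism of A with g^p = id. Let W be a simple left A-module such that for every i with 1 ≤ i ≤ p−1 the twisted module W∘gⁱ is not isomorphic to W as an A-module. Then W, regarded as a module over the fixed subalgebra A^g = {a ∈ A : g(a) = a} by restriction of the action, is a simple A^g-module. -/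
theorem aux_gen {A W : Type*} [Ring A] [AddCommGroup W] [Module A W]
    (hW : IsSimpleModule A W) {x : W} (hx : x ≠ 0) (y : W) : ∃ c : A, c • x = y := by
  have := (isSimpleModule_iff_toSpanSingleton_surjective.1 hW).2 x hx y
  simpa using this

theorem aux_iso {A W : Type*} [Ring A] [Algebra ℂ A] [AddCommGroup W] [Module A W]
    (hW : IsSimpleModule A W) (w : W) (J : Submodule A A) (σ τ : A ≃ₐ[ℂ] A)
    (hσ : ∃ a ∈ J, σ a • w ≠ 0) (hτ : ∃ a ∈ J, τ a • w ≠ 0)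
    (h : ∀ a ∈ J, σ a • w = 0 → τ a • w = 0) :
    ∃ f : W ≃+ W, ∀ (a : A) (x : W), f (σ a • x) = τ a • f x := by
  have key : ∀ ρ : A ≃ₐ[ℂ] A, (∃ a ∈ J, ρ a • w ≠ 0) → ∀ x : W, ∃ a ∈ J, ρ a • w = x := by
    rintro ρ ⟨a, ha, hne⟩ x
    obtain ⟨c, hc⟩ := aux_gen hW hne x
    refine ⟨ρ.symm c * a, J.smul_mem _ ha, ?_⟩
    simp [mul_smul, hc]
  choose s hsJ hs using key σ hσ
  have hf : ∀ a ∈ J, τ (s (σ a • w)) • w = τ a • w := by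
    intro a ha
    have := h (s (σ a • w) - a) (J.sub_mem (hsJ _) ha) (by simp [sub_smul, hs])
    simpa [sub_smul, sub_eq_zero] using this
  let f : W →+ W := AddMonoidHom.mk' (fun x => τ (s x) • w) (by
    intro x y
    have := hf (s x + s y) (J.add_mem (hsJ _) (hsJ _))
    simpa [add_smul, hs] using this)
  have hfx : ∀ x, f x = τ (s x) • w := fun _ => rfl
  have hlin : ∀ (a : A) (x : W), f (σ a • x) = τ a • f x := by
    intro a x
    have := hf (a * s x) (J.smul_mem a (hsJ x))
    simpa [mul_smul, hs, hfx] using this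
  have hsurj : Function.Surjective f := by
    intro y
    obtain ⟨a, ha, hay⟩ := key τ hτ y
    exact ⟨σ a • w, by rw [hfx, hf a ha, hay]⟩
  have hinj : Function.Injective f := by
    rw [injective_iff_map_eq_zero]
    intro x hx
    by_contra hne
    obtain ⟨a, ha, hne'⟩ := hτ
    obtain ⟨z, hz⟩ := hsurj (τ a • w)
    obtain ⟨c, hc⟩ := aux_gen hW hne z
    apply hne'
    rw [← hz, ← hc, ← σ.apply_symm_apply c, hlin, hx, smul_zero]
  exact ⟨AddEquiv.ofBijective f ⟨hinj, hsurj⟩, hlin⟩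

/-- Let `g` be a `ℂ`-algebra automorphism of `A` with `g^p = id`, `p ≥ 1`,
and `W` a simple `A`-module with `W ∘ gⁱ ≇ W` for `1 ≤ i ≤ p − 1`. Then `W` is simple over
the fixed subalgebra `A^g`. -/
theorem simple_over_fixed_subalgebra_of_finite_order
    (A : Type*) [Ring A] [Algebra ℂ A]
    (p : ℕ) (hp : 1 ≤ p)
    (g : A ≃ₐ[ℂ] A) (hg : g ^ p = 1)
    (W : Type*) [AddCommGroup W] [Module A W]
    (hW : IsSimpleModule A W)
    (hnoniso : ∀ i : ℕ, 1 ≤ i → i ≤ p - 1 →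
      ¬ ∃ f : W ≃+ W, ∀ (a : A) (w : W), f ((g ^ i) a • w) = a • f w) :
    IsSimpleModule (fixedSubalgebra g) W := by
  have hno1 : ∀ j k : ℕ, j < k → k < p →
      ¬ ∃ f : W ≃+ W, ∀ (a : A) (x : W), f ((g ^ k) a • x) = (g ^ j) a • f x := by
    rintro j k hjk hk ⟨f, hf⟩
    refine hnoniso (k - j) (by omega) (by omega) ⟨f, fun a x => ?_⟩
    have := hf ((g ^ j).symm a) x
    rw [AlgEquiv.apply_symm_apply] at this
    rw [← this]
    congr 2
    conv_rhs => rw [← Nat.sub_add_cancel hjk.le, pow_add, AlgEquiv.mul_apply,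
      AlgEquiv.apply_symm_apply]
  have hno : ∀ j k : ℕ, j ≠ k → j < p → k < p →
      ¬ ∃ f : W ≃+ W, ∀ (a : A) (x : W), f ((g ^ k) a • x) = (g ^ j) a • f x := by
    rintro j k hjk hj hk ⟨f, hf⟩
    rcases lt_or_gt_of_ne hjk with h | h
    · exact hno1 j k h hk ⟨f, hf⟩
    · refine hno1 k j h hj ⟨f.symm, fun a x => ?_⟩
      rw [AddEquiv.symm_apply_eq, hf, AddEquiv.apply_symm_apply]
  rw [isSimpleModule_iff_toSpanSingleton_surjective]
  refine ⟨(isSimpleModule_iff_toSpanSingleton_surjective.1 hW).1, fun w hw u => ?_⟩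
  have main : ∀ s : Finset ℕ, (∀ i ∈ s, i < p) → ∀ j < p, j ∉ s →
      ∃ a : A, (∀ i ∈ s, (g ^ i) a • w = 0) ∧ (g ^ j) a • w ≠ 0 := by
    intro s
    induction s using Finset.induction_on with
    | empty => exact fun _ j _ _ => ⟨1, by simp, by simpa using hw⟩
    | insert k s hks ih =>
      intro hs j hj hjs
      have hs' : ∀ i ∈ s, i < p := fun i hi => hs i (Finset.mem_insert_of_mem hi)
      have hk : k < p := hs k (Finset.mem_insert_self _ _)
      rw [Finset.mem_insert, not_or] at hjs
      by_contra hcon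
      push Not at hcon
      let J : Submodule A A :=
        { carrier := {a | ∀ i ∈ s, (g ^ i) a • w = 0}
          add_mem' := fun {a b} ha hb i hi => by
            rw [map_add, add_smul, ha i hi, hb i hi, add_zero]
          zero_mem' := fun i hi => by rw [map_zero, zero_smul]
          smul_mem' := fun c a ha i hi => by
            rw [smul_eq_mul, map_mul, mul_smul, ha i hi, smul_zero] }
      refine hno j k hjs.1 hj hk (aux_iso hW w J (g ^ k) (g ^ j) (ih hs' k hk hks)
        (ih hs' j hj hjs.2) fun a ha hak => hcon a fun i hi => ?_)
      rcases Finset.mem_insert.1 hi with rfl | hi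
      · exact hak
      · exact ha i hi
  obtain ⟨a, ha, hne⟩ := main ((Finset.range p).erase 0)
    (fun i hi => Finset.mem_range.1 (Finset.mem_of_mem_erase hi)) 0 hp (by simp)
  obtain ⟨c, hc⟩ := aux_gen hW hne u
  have hfix : g (∑ i ∈ Finset.range p, (g ^ i) (c * a)) =
      ∑ i ∈ Finset.range p, (g ^ i) (c * a) := by
    have h1 := Finset.sum_range_succ (fun i => (g ^ i) (c * a)) p
    rw [Finset.sum_range_succ', hg, pow_zero] at h1
    rw [map_sum, ← add_right_cancel h1]
    exact Finset.sum_congr rfl fun i _ => by rw [pow_succ', AlgEquiv.mul_apply]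
  refine ⟨⟨_, hfix⟩, ?_⟩
  change (∑ i ∈ Finset.range p, (g ^ i) (c * a)) • w = u
  rw [Finset.sum_smul, Finset.sum_eq_single_of_mem 0 (Finset.mem_range.2 hp)]
  · simpa [mul_smul] using hc
  · intro i hi h0
    rw [map_mul, mul_smul, ha i (Finset.mem_erase.2 ⟨h0, hi⟩), smul_zero]
end

section
/- Let A be a unital associative algebra over ℂ, let p ≥ 1 be an integer, and let g be a ℂ-algebra automorphism of A with g^p = id. Let W be a simple left A-module of at most countable complex dimension, and suppose W is isomorphic to the twisted module W∘g as an A-module. Then there exists a ℂ-linear bijection Φ : W → W satisfying Φ(a·w) = g(a)·Φ(w) for all a ∈ A, w ∈ W, and Φ^p = id_W. -/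
theorem aux_spectrum_nonempty (W : Type*) [AddCommGroup W] [Module ℂ W] [Nontrivial W]
    (hcount : Module.rank ℂ W ≤ Cardinal.aleph0) (T : Module.End ℂ W) :
    (spectrum ℂ T).Nonempty := by
  classical
  by_contra hne
  rw [Set.not_nonempty_iff_eq_empty] at hne
  have hu : ∀ c : ℂ, IsUnit (T - algebraMap ℂ (Module.End ℂ W) c) := by
    intro c
    have : c ∉ spectrum ℂ T := by simp [hne]
    rw [spectrum.notMem_iff] at this
    rw [← IsUnit.neg_iff]
    simpa using this
  have hq : ∀ q : Polynomial ℂ, q ≠ 0 → IsUnit (Polynomial.aeval T q) := by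
    intro q hq0
    by_cases hd : 0 < q.degree
    · have h := spectrum.map_polynomial_aeval_of_degree_pos T q hd
      rw [hne, Set.image_empty] at h
      have h0 : (0 : ℂ) ∉ spectrum ℂ (Polynomial.aeval T q) := by simp [h]
      exact spectrum.zero_notMem_iff ℂ |>.1 h0
    · rw [Polynomial.eq_C_of_degree_le_zero (not_lt.1 hd)] at hq0 ⊢
      rw [Polynomial.aeval_C]
      exact (IsUnit.mk0 _ (by simpa using hq0)).map _
  obtain ⟨w, hw⟩ := exists_ne (0 : W)
  choose u huu using hu
  let v : ℂ → W := fun c => (↑(u c)⁻¹ : Module.End ℂ W) w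
  have hv : ∀ c, (T - algebraMap ℂ (Module.End ℂ W) c) (v c) = w := by
    intro c
    rw [← huu c]
    change ((u c : Module.End ℂ W) * ↑(u c)⁻¹) w = w
    simp
  have hli : LinearIndependent ℂ v := by
    rw [linearIndependent_iff']
    intro s a hs i hi
    by_contra hai
    let q : Polynomial ℂ := ∑ j ∈ s, Polynomial.C (a j) *
      ∏ k ∈ s.erase j, (Polynomial.X - Polynomial.C k)
    have hqi : q.eval i ≠ 0 := by
      simp only [q, Polynomial.eval_finset_sum, Polynomial.eval_mul, Polynomial.eval_C,
        Polynomial.eval_prod, Polynomial.eval_sub, Polynomial.eval_X]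
      rw [Finset.sum_eq_single i]
      · refine mul_ne_zero hai (Finset.prod_ne_zero_iff.2 fun k hk => ?_)
        exact sub_ne_zero.2 (Finset.ne_of_mem_erase hk).symm
      · intro j _ hji
        rw [Finset.prod_eq_zero (Finset.mem_erase.2 ⟨hji.symm, hi⟩) (sub_self i), mul_zero]
      · exact fun h => absurd hi h
    have hq0 : q ≠ 0 := by
      intro h
      simp [h] at hqi
    have hz : Polynomial.aeval T q w = 0 := by
      have h1 := congrArg (Polynomial.aeval T (∏ k ∈ s, (Polynomial.X - Polynomial.C k))) hs
      rw [map_zero, map_sum] at h1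
      rw [← h1]
      simp only [q, map_sum, LinearMap.sum_apply]
      refine Finset.sum_congr rfl fun j hj => ?_
      rw [← Finset.prod_erase_mul s _ hj, map_mul, map_mul, Module.End.mul_apply,
        Module.End.mul_apply, map_smul, map_smul]
      have : Polynomial.aeval T (Polynomial.X - Polynomial.C j) (v j) = w := by
        rw [map_sub, Polynomial.aeval_X, Polynomial.aeval_C]
        exact hv j
      rw [this, Polynomial.aeval_C, Module.algebraMap_end_apply]
    have hinj := ((Module.End.isUnit_iff _).1 (hq q hq0)).1
    exact hw (hinj (by rw [hz, map_zero]))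
  have h1 := hli.cardinal_lift_le_rank
  have h2 : Cardinal.lift.{0} (Module.rank ℂ W) ≤ Cardinal.aleph0 := by simpa using hcount
  rw [Cardinal.mk_complex] at h1
  have h3 := h1.trans h2
  rw [Cardinal.lift_continuum] at h3
  exact absurd Cardinal.aleph0_lt_continuum (not_lt.2 h3)


/-- If `g^p = id`, `W` is a simple `A`-module of at most countable complex
dimension and `W ≅ W ∘ g`, then there is a `ℂ`-linear bijection `Φ : W → W` with
`Φ(a·w) = g(a)·Φ(w)` and `Φ^p = id`. -/
theorem exists_linear_period_p_twist_intertwiner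
    (A : Type*) [Ring A] [Algebra ℂ A]
    (p : ℕ) (hp : 1 ≤ p)
    (g : A ≃ₐ[ℂ] A) (hg : g ^ p = 1)
    (W : Type*) [AddCommGroup W] [Module ℂ W] [Module A W] [IsScalarTower ℂ A W]
    (hW : IsSimpleModule A W)
    (hcount : Module.rank ℂ W ≤ Cardinal.aleph0)
    (hiso : ∃ f : W ≃+ W, ∀ (a : A) (w : W), f (a • w) = g a • f w) :
    ∃ Φ : W →ₗ[ℂ] W, Function.Bijective Φ ∧
      (∀ (a : A) (w : W), Φ (a • w) = g a • Φ w) ∧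
      Φ ^ p = (1 : W →ₗ[ℂ] W) := by
  obtain ⟨f, hf⟩ := hiso
  haveI := hW
  haveI : Nontrivial W := IsSimpleModule.nontrivial A W
  haveI : SMulCommClass ℂ A W := IsScalarTower.to_smulCommClass
  let F : W →ₗ[ℂ] W :=
    { toFun := f
      map_add' := map_add f
      map_smul' := by
        intro c w
        have h := hf (algebraMap ℂ A c) w
        rw [AlgEquiv.commutes, algebraMap_smul, algebraMap_smul] at h
        exact h }
  have hF : ∀ (a : A) (w : W), F (a • w) = g a • F w := hf
  have hFb : Function.Bijective F := f.bijective
  have hpow : ∀ (n : ℕ) (a : A) (w : W), (F ^ n) (a • w) = (g ^ n) a • (F ^ n) w := by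
    intro n
    induction n with
    | zero => intro a w; simp
    | succ n ih =>
      intro a w
      rw [pow_succ', pow_succ', Module.End.mul_apply, Module.End.mul_apply, ih, hF]
      rfl
  obtain ⟨c, hc⟩ := aux_spectrum_nonempty W hcount (F ^ p)
  let S : W →ₗ[A] W :=
    { toFun := fun w => c • w - (F ^ p) w
      map_add' := by intro x y; rw [smul_add, map_add]; abel
      map_smul' := by
        intro a w
        rw [hpow, hg, RingHom.id_apply, smul_sub, smul_comm]
        rfl }
  have hS : S = 0 := by
    by_contra h
    have hb := LinearMap.bijective_of_ne_zero h
    rw [spectrum.mem_iff] at hc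
    exact hc ((Module.End.isUnit_iff _).2 hb)
  have hFp : ∀ w, (F ^ p) w = c • w := by
    intro w
    have h : S w = 0 := by rw [hS]; rfl
    exact (sub_eq_zero.1 h).symm
  have hFpu : IsUnit (F ^ p) := ((Module.End.isUnit_iff F).2 hFb).pow p
  have hc0 : c ≠ 0 := by
    rintro rfl
    obtain ⟨w, hw⟩ := exists_ne (0 : W)
    apply hw
    apply ((Module.End.isUnit_iff _).1 hFpu).1
    rw [hFp, zero_smul, map_zero]
  obtain ⟨d, hd⟩ := IsAlgClosed.exists_pow_nat_eq c⁻¹ (n := p) hp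
  have hd0 : d ≠ 0 := by
    rintro rfl
    rw [zero_pow (by omega)] at hd
    exact inv_ne_zero hc0 hd.symm
  refine ⟨d • F, ?_, ?_, ?_⟩
  · exact (MulAction.bijective₀ hd0).comp hFb
  · intro a w
    rw [LinearMap.smul_apply, LinearMap.smul_apply, hF, smul_comm]
  · rw [smul_pow, hd]
    ext w
    rw [LinearMap.smul_apply, hFp, smul_smul, inv_mul_cancel₀ hc0, one_smul]
    rfl
end

section
/- Let A be a unital associative algebra over ℂ, p ≥ 1, and g a ℂ-algebra automorphism of A with g^p = id. Let W be a simple left A-module and suppose Φ : W → W is a ℂ-linear bijection with Φ(a·w) = g(a)·Φ(w) for all a ∈ A, w ∈ W, and Φ^p = id_W. Let ζ = e^{2πi/p}, and for 0 ≤ j ≤ p−1 set W^j = ker(Φ − ζ^j·id_W) and A^i = {a ∈ A : g(a) = ζ^i·a}. Then: (1) W = W^0 ⊕ W^1 ⊕ ⋯ ⊕ W^{p−1}; (2) A^i·W^j ⊆ W^{(i+j) mod p} for all i, j; and (3) every nonzero W^j is a simple module over the fixed subalgebra A^g = A^0 = {a ∈ A : g(a) = a}. -/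
/-- The primitive `p`-th root of unity `ζ = e^{2πi/p}`. -/
noncomputable def primRoot (p : ℕ) : ℂ :=
  Complex.exp (2 * Real.pi * Complex.I / p)

/-- The eigenspace `W^j = ker(Φ − ζ^j·id)` of a `ℂ`-linear map `Φ`, for `ζ = e^{2πi/p}`. -/
noncomputable def eigenSp {W : Type*} [AddCommGroup W] [Module ℂ W]
    (Φ : W →ₗ[ℂ] W) (p j : ℕ) : Submodule ℂ W :=
  LinearMap.ker (Φ - (primRoot p) ^ j • (1 : W →ₗ[ℂ] W))

theorem aux_prim (p : ℕ) (hp : 1 ≤ p) : IsPrimitiveRoot (primRoot p) p :=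
  Complex.isPrimitiveRoot_exp p (by omega)

theorem aux_mem {W : Type*} [AddCommGroup W] [Module ℂ W]
    (Φ : W →ₗ[ℂ] W) (p j : ℕ) (w : W) :
    w ∈ eigenSp Φ p j ↔ Φ w = (primRoot p) ^ j • w := by
  simp [eigenSp, sub_eq_zero]

theorem aux_shift {M : Type*} [AddCommGroup M] (f : ℕ → M) (p : ℕ) (h : f p = f 0) :
    ∑ k ∈ Finset.range p, f (k + 1) = ∑ k ∈ Finset.range p, f k := by
  have h1 := Finset.sum_range_succ f p
  have h2 := Finset.sum_range_succ' f p
  rw [h1, h] at h2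
  exact (add_right_cancel h2).symm

theorem aux_top {W : Type*} [AddCommGroup W] [Module ℂ W]
    (p : ℕ) (hp : 1 ≤ p) (Φ : W →ₗ[ℂ] W) (hΦp : Φ ^ p = (1 : W →ₗ[ℂ] W)) :
    (⨆ j : Fin p, eigenSp Φ p (j : ℕ)) = ⊤ := by
  have hz := aux_prim p hp
  have hz0 : primRoot p ≠ 0 := hz.ne_zero (by omega)
  have hp0 : (p : ℂ) ≠ 0 := by exact_mod_cast (by omega : p ≠ 0)
  rw [eq_top_iff]
  intro w _
  let v : ℕ → W := fun j => ∑ k ∈ Finset.range p, (((primRoot p)⁻¹ ^ j) ^ k) • (Φ ^ k) w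
  have hv : ∀ j, v j ∈ eigenSp Φ p j := by
    intro j
    rw [aux_mem]
    have := aux_shift (fun k => (((primRoot p)⁻¹ ^ j) ^ k) • (Φ ^ k) w) p (by
      have : ((primRoot p)⁻¹ ^ j) ^ p = 1 := by
        rw [← pow_mul, mul_comm, pow_mul, inv_pow, hz.pow_eq_one]; simp
      simp only [this, hΦp, pow_zero])
    change Φ (v j) = primRoot p ^ j • ∑ k ∈ Finset.range p, _
    rw [← this, Finset.smul_sum, map_sum]
    refine Finset.sum_congr rfl fun k _ => ?_
    rw [map_smul, smul_smul, pow_succ', ← mul_assoc, ← mul_pow, mul_inv_cancel₀ hz0, one_pow,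
      one_mul, pow_succ' Φ k]
    rfl
  have hsum : ∑ j ∈ Finset.range p, v j = (p : ℂ) • w := by
    simp only [v]
    rw [Finset.sum_comm, Finset.sum_eq_single 0]
    · simp [Nat.cast_smul_eq_nsmul]
    · intro k hk hk0
      rw [← Finset.sum_smul]
      have hne : (primRoot p)⁻¹ ^ k ≠ 1 :=
        hz.inv.pow_ne_one_of_pos_of_lt hk0 (Finset.mem_range.1 hk)
      have h0 : ∑ j ∈ Finset.range p, ((primRoot p)⁻¹ ^ k) ^ j = 0 := by
        rw [geom_sum_eq hne, ← pow_mul, mul_comm, pow_mul, hz.inv.pow_eq_one]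
        simp
      have h1 : ∑ j ∈ Finset.range p, ((primRoot p)⁻¹ ^ j) ^ k = 0 := by
        rw [← h0]
        exact Finset.sum_congr rfl fun j _ => by rw [← pow_mul, mul_comm, pow_mul]
      rw [h1, zero_smul]
    · intro h
      exact absurd (Finset.mem_range.2 (by omega)) h
  have hw : w = (p : ℂ)⁻¹ • ∑ j ∈ Finset.range p, v j := by
    rw [hsum, smul_smul, inv_mul_cancel₀ hp0, one_smul]
  rw [hw]
  refine Submodule.smul_mem _ _ (Submodule.sum_mem _ fun j hj => ?_)
  exact Submodule.mem_iSup_of_mem (⟨j, Finset.mem_range.1 hj⟩ : Fin p) (hv j)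

/-- With `g^p = id`, `W` simple over `A`, and `Φ` a `ℂ`-linear bijection
with `Φ(a·w) = g(a)·Φ(w)` and `Φ^p = id`: (1) `W = W^0 ⊕ ⋯ ⊕ W^{p−1}` for the eigenspaces
`W^j = ker(Φ − ζ^j·id)`; (2) `A^i·W^j ⊆ W^{(i+j) mod p}` where `A^i = {a : g(a) = ζ^i·a}`;
(3) every nonzero `W^j` is simple over the fixed subalgebra `A^g` (i.e. the only
`A^g`-stable subspaces of `W^j` are `0` and `W^j`). -/
theorem eigenspace_decomposition_of_twist_intertwiner
    (A : Type*) [Ring A] [Algebra ℂ A]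
    (p : ℕ) (hp : 1 ≤ p)
    (g : A ≃ₐ[ℂ] A) (hg : g ^ p = 1)
    (W : Type*) [AddCommGroup W] [Module ℂ W] [Module A W] [IsScalarTower ℂ A W]
    (hW : IsSimpleModule A W)
    (Φ : W →ₗ[ℂ] W) (hbij : Function.Bijective Φ)
    (hcomm : ∀ (a : A) (w : W), Φ (a • w) = g a • Φ w)
    (hΦp : Φ ^ p = (1 : W →ₗ[ℂ] W)) :
    (DirectSum.IsInternal fun j : Fin p => eigenSp Φ p (j : ℕ)) ∧
    (∀ i j : Fin p, ∀ a : A, g a = (primRoot p) ^ (i : ℕ) • a →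
      ∀ w ∈ eigenSp Φ p (j : ℕ), a • w ∈ eigenSp Φ p (((i : ℕ) + (j : ℕ)) % p)) ∧
    (∀ j : Fin p, eigenSp Φ p (j : ℕ) ≠ ⊥ →
      ∀ S : Submodule ℂ W, S ≤ eigenSp Φ p (j : ℕ) →
        (∀ a : A, g a = a → ∀ s ∈ S, a • s ∈ S) →
        S = ⊥ ∨ S = eigenSp Φ p (j : ℕ)) := by
  have hz := aux_prim p hp
  have hz0 : primRoot p ≠ 0 := hz.ne_zero (by omega)
  have hp0 : (p : ℂ) ≠ 0 := by exact_mod_cast (by omega : p ≠ 0)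
  refine ⟨?_, ?_, ?_⟩
  · rw [DirectSum.isInternal_submodule_iff_iSupIndep_and_iSup_eq_top]
    refine ⟨?_, aux_top p hp Φ hΦp⟩
    have h := (Module.End.eigenspaces_iSupIndep Φ).comp
      (f := fun j : Fin p => primRoot p ^ (j : ℕ))
      (fun a b hab => Fin.ext (hz.pow_inj a.2 b.2 hab))
    convert h using 1
    funext j
    ext w
    simp [aux_mem, Module.End.mem_eigenspace_iff]
  · intro i j a ha w hw
    rw [aux_mem] at hw ⊢
    rw [hcomm, ha, hw, smul_assoc, smul_comm a, smul_smul, ← pow_add]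
    congr 1
    conv_lhs => rw [← Nat.mod_add_div ((i : ℕ) + j) p]
    rw [pow_add, pow_mul, hz.pow_eq_one, one_pow, mul_one]
  · intro j _ S hS hst
    by_cases hb : S = ⊥
    · exact Or.inl hb
    right
    refine le_antisymm hS fun w hw => ?_
    obtain ⟨s, hs, hs0⟩ := Submodule.exists_mem_ne_zero_of_ne_bot hb
    obtain ⟨a, ha⟩ := IsSimpleModule.toSpanSingleton_surjective A hs0 w
    rw [LinearMap.toSpanSingleton_apply] at ha
    have hsj := (aux_mem Φ p j s).1 (hS hs)
    rw [aux_mem] at hw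
    have hk : ∀ k : ℕ, ((g ^ k) a) • s = w := by
      intro k
      induction k with
      | zero => simpa using ha
      | succ k ih =>
        have h1 := congrArg Φ ih
        rw [hcomm, hsj, hw, smul_comm] at h1
        rw [pow_succ']
        exact smul_right_injective W (pow_ne_zero _ hz0) h1
    have hfix : g (∑ k ∈ Finset.range p, (g ^ k) a) = ∑ k ∈ Finset.range p, (g ^ k) a := by
      rw [map_sum, ← aux_shift (fun k => (g ^ k) a) p (by simp [hg])]
      exact Finset.sum_congr rfl fun k _ => by rw [pow_succ']; rfl
    have hmem := S.smul_mem (p : ℂ)⁻¹ (hst _ hfix s hs)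
    rw [Finset.sum_smul, Finset.sum_congr rfl fun k _ => hk k, Finset.sum_const,
      Finset.card_range, ← Nat.cast_smul_eq_nsmul ℂ, smul_smul, inv_mul_cancel₀ hp0,
      one_smul] at hmem
    exact hmem
end

section
/- Let A be a unital associative algebra over ℂ, p ≥ 1, and g a ℂ-algebra automorphism of A with g^p = id. Let W be a simple left A-module of at most countable complex dimension and Φ : W → W a ℂ-linear bijection with Φ(a·w) = g(a)·Φ(w) for all a, w, and Φ^p = id_W. Let ζ = e^{2πi/p} and W^j = ker(Φ − ζ^j·id_W) for 0 ≤ j ≤ p−1. Then for i ≠ j with W^i ≠ 0 and W^j ≠ 0, the A^g-modules W^i and W^j are not isomorphic, where A^g = {a ∈ A : g(a) = a} is the fixed subalgebra. -/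
open Polynomial in
theorem schur_aux {A : Type*} [Ring A] [Algebra ℂ A]
    {W : Type*} [AddCommGroup W] [Module ℂ W] [Module A W] [IsScalarTower ℂ A W]
    (hW : IsSimpleModule A W)
    (hcount : Module.rank ℂ W ≤ Cardinal.aleph0) (T : Module.End A W) :
    ∃ c : ℂ, T = algebraMap ℂ (Module.End A W) c := by
  classical
  by_contra! hT
  have hnt : Nontrivial W := IsSimpleModule.nontrivial A W
  have hsp : spectrum ℂ T = ∅ := by
    ext c
    simp only [Set.mem_empty_iff_false, iff_false, spectrum.mem_iff, not_not]
    have : algebraMap ℂ (Module.End A W) c - T ≠ 0 := fun h => hT c (sub_eq_zero.1 h).symm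
    exact (Module.End.isUnit_iff _).2 (LinearMap.bijective_of_ne_zero this)
  have H0 : ∀ q : ℂ[X], aeval T q = 0 → q = 0 := by
    intro q hq
    by_contra hq0
    by_cases hd : 0 < degree q
    · have := spectrum.map_polynomial_aeval_of_degree_pos T q hd
      rw [hq, hsp, spectrum.zero_eq] at this
      simp at this
    · rw [eq_C_of_degree_le_zero (not_lt.1 hd)] at hq hq0
      rw [aeval_C] at hq
      exact hq0 (by rw [(map_eq_zero_iff _ (algebraMap ℂ (Module.End A W)).injective).1 hq, C_0])
  obtain ⟨w, hw⟩ := exists_ne (0 : W)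
  have H : ∀ q : ℂ[X], aeval T q w = 0 → q = 0 := by
    intro q hq
    apply H0
    by_contra hne
    exact hw (LinearMap.injective_of_ne_zero hne (by rw [hq, map_zero]))
  have hv : ∀ c : ℂ, ∃ v : W, aeval T (X - C c) v = w := fun c =>
    LinearMap.surjective_of_ne_zero (fun h => X_sub_C_ne_zero c (H0 _ h)) w
  choose v hv using hv
  have hli : LinearIndependent ℂ v := by
    refine linearIndependent_iff'.2 fun s m hm i hi ↦ ?_
    have h1 : ∀ i ∈ s, aeval T (s.prod fun j ↦ X - C j) (m i • v i) =
        aeval T (C (m i) * (s.erase i).prod fun j ↦ X - C j) w := fun i hi ↦ by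
      rw [← s.prod_erase_mul _ hi, map_mul, Module.End.mul_apply, map_mul, Module.End.mul_apply,
        aeval_C, LinearMap.map_smul_of_tower, LinearMap.map_smul_of_tower, hv]
      simp [Module.algebraMap_end_apply]
    let p : ℂ[X] := s.sum fun i ↦ C (m i) * (s.erase i).prod fun j ↦ X - C j
    have hp : p = 0 := by
      apply H
      simp only [p, map_sum, LinearMap.sum_apply]
      rw [← Finset.sum_congr rfl h1, ← map_sum, hm, map_zero]
    have h3 := congrArg (eval i) hp
    have h2 : ∀ j ∈ s.erase i, m j * ((s.erase j).prod fun x ↦ i - x) = 0 := fun j hj ↦ by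
      have := Finset.mem_erase_of_ne_of_mem (Finset.ne_of_mem_erase hj).symm hi
      simp_rw [← (s.erase j).prod_erase_mul _ this, sub_self, mul_zero]
    simp only [p, eval_finsetSum, eval_mul, eval_C, eval_prod, eval_sub, eval_X, eval_zero] at h3
    rw [← s.sum_erase_add _ hi, Finset.sum_eq_zero h2, zero_add] at h3
    exact (mul_eq_zero.1 h3).resolve_right (Finset.prod_ne_zero_iff.2 fun j hj ↦
      sub_ne_zero.2 (Finset.ne_of_mem_erase hj).symm)
  have h := hli.cardinal_lift_le_rank
  have h' := h.trans (Cardinal.lift_le.2 hcount)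
  rw [Cardinal.lift_aleph0, Cardinal.lift_le_aleph0, Cardinal.mk_complex] at h'
  exact absurd Cardinal.aleph0_lt_continuum (not_lt.2 h')

theorem density_aux {A : Type*} [Ring A] [Algebra ℂ A]
    {W : Type*} [AddCommGroup W] [Module ℂ W] [Module A W] [IsScalarTower ℂ A W]
    (hW : IsSimpleModule A W)
    (hcount : Module.rank ℂ W ≤ Cardinal.aleph0) (x y : W) (hy : y ≠ 0)
    (hxy : ∀ c : ℂ, x ≠ c • y) : ∃ a : A, a • x = x ∧ a • y = 0 := by
  let L := LinearMap.toSpanSingleton A W y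
  let K := LinearMap.ker L
  let N := K.map (LinearMap.toSpanSingleton A W x)
  rcases eq_bot_or_eq_top N with h | h
  · exfalso
    have hs : Function.Surjective L := IsSimpleModule.toSpanSingleton_surjective A hy
    have hle : K ≤ LinearMap.ker (LinearMap.toSpanSingleton A W x) := by
      rw [LinearMap.le_ker_iff_map]; exact h
    let T : Module.End A W := (K.liftQ _ hle).comp (L.quotKerEquivOfSurjective hs).symm.toLinearMap
    have hTy : T y = x := by
      have : (L.quotKerEquivOfSurjective hs).symm y = K.mkQ 1 := by
        rw [LinearEquiv.symm_apply_eq]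
        simp [K, L]
      simp only [T, LinearMap.comp_apply, LinearEquiv.coe_coe]
      rw [this]
      simp
    obtain ⟨c, hc⟩ := schur_aux hW hcount T
    apply hxy c
    rw [← hTy, hc, Module.algebraMap_end_apply]
  · have : x ∈ N := h ▸ Submodule.mem_top
    obtain ⟨a, ha, hax⟩ := this
    exact ⟨a, by simpa using hax, by simpa [K, L] using ha⟩

/-- With `g^p = id`, `W` simple of at most countable complex dimension,
and `Φ` as in Statement 8, the nonzero eigenspaces `W^i = ker(Φ − ζ^i·id)` for distinct
`i, j` are non-isomorphic as `A^g`-modules: there is no additive bijection `W^i → W^j`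
commuting with the action of every `g`-fixed element of `A`. -/
theorem eigenspaces_nonisomorphic_over_fixed_subalgebra
    (A : Type*) [Ring A] [Algebra ℂ A]
    (p : ℕ) (hp : 1 ≤ p)
    (g : A ≃ₐ[ℂ] A) (hg : g ^ p = 1)
    (W : Type*) [AddCommGroup W] [Module ℂ W] [Module A W] [IsScalarTower ℂ A W]
    (hW : IsSimpleModule A W)
    (hcount : Module.rank ℂ W ≤ Cardinal.aleph0)
    (Φ : W →ₗ[ℂ] W) (hbij : Function.Bijective Φ)
    (hcomm : ∀ (a : A) (w : W), Φ (a • w) = g a • Φ w)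
    (hΦp : Φ ^ p = (1 : W →ₗ[ℂ] W)) :
    ∀ i j : Fin p, i ≠ j →
      eigenSp Φ p (i : ℕ) ≠ ⊥ → eigenSp Φ p (j : ℕ) ≠ ⊥ →
      ¬ ∃ f : (eigenSp Φ p (i : ℕ)) ≃+ (eigenSp Φ p (j : ℕ)),
          ∀ a : A, g a = a → ∀ (x : eigenSp Φ p (i : ℕ))
            (hx : a • (x : W) ∈ eigenSp Φ p (i : ℕ)),
            (f ⟨a • (x : W), hx⟩ : W) = a • (f x : W) := by
  intro i j hij hi hj ⟨f, hf⟩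
  have hp0 : p ≠ 0 := by omega
  have hprim : IsPrimitiveRoot (primRoot p) p := Complex.isPrimitiveRoot_exp p hp0
  have hz : primRoot p ≠ 0 := hprim.ne_zero hp0
  have hmem : ∀ (k : ℕ) (w : W), w ∈ eigenSp Φ p k ↔ Φ w = primRoot p ^ k • w := by
    intro k w
    simp [eigenSp, LinearMap.mem_ker, sub_eq_zero]
  obtain ⟨x, hx, hx0⟩ := (Submodule.ne_bot_iff _).1 hi
  obtain ⟨y, hfy⟩ : ∃ y, y = f ⟨x, hx⟩ := ⟨_, rfl⟩
  have hy0 : (y : W) ≠ 0 := by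
    intro h
    rw [hfy, ZeroMemClass.coe_eq_zero, EmbeddingLike.map_eq_zero_iff] at h
    exact hx0 (congrArg Subtype.val h)
  have hΦx := (hmem _ _).1 hx
  have hΦy := (hmem _ _).1 y.2
  have hxy : ∀ c : ℂ, x ≠ c • (y : W) := by
    intro c hc
    have h1 : primRoot p ^ (i : ℕ) • x = primRoot p ^ (j : ℕ) • x := by
      rw [← hΦx, hc, map_smul, hΦy, smul_comm]
    have h2 := smul_left_injective ℂ hx0 h1
    exact hij (Fin.ext (hprim.pow_inj i.2 j.2 h2))
  obtain ⟨a, hax, hay⟩ := density_aux hW hcount x y hy0 hxy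
  have hgx : ∀ k : ℕ, (g ^ k) a • x = x := by
    intro k
    induction k with
    | zero => simpa using hax
    | succ k ih =>
      have h := hcomm ((g ^ k) a) x
      rw [ih, hΦx, smul_comm] at h
      rw [pow_succ', AlgEquiv.mul_apply]
      exact (smul_right_injective W (pow_ne_zero (i : ℕ) hz) h).symm
  have hgy : ∀ k : ℕ, (g ^ k) a • (y : W) = 0 := by
    intro k
    induction k with
    | zero => simpa using hay
    | succ k ih =>
      have h := hcomm ((g ^ k) a) y
      rw [ih, hΦy, smul_comm, map_zero] at h
      rw [pow_succ', AlgEquiv.mul_apply]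
      exact (smul_eq_zero.1 h.symm).resolve_left (pow_ne_zero (j : ℕ) hz)
  obtain ⟨b, hb⟩ : ∃ b : A, b = ∑ k ∈ Finset.range p, (g ^ k) a := ⟨_, rfl⟩
  have hgb : g b = b := by
    have h1 : g b = ∑ k ∈ Finset.range p, (g ^ (k + 1)) a := by
      rw [hb, map_sum]
      simp only [pow_succ', AlgEquiv.mul_apply]
    have h2 := Finset.sum_range_succ (fun k => (g ^ k) a) p
    rw [Finset.sum_range_succ', hg, ← h1, ← hb, pow_zero] at h2
    exact add_right_cancel h2
  have hbx : b • x = p • x := by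
    rw [hb, Finset.sum_smul, Finset.sum_congr rfl (fun k _ => hgx k)]
    simp
  have hby : b • (y : W) = 0 := by
    rw [hb, Finset.sum_smul, Finset.sum_congr rfl (fun k _ => hgy k)]
    simp
  have hbm : b • x ∈ eigenSp Φ p (i : ℕ) := by
    rw [hbx]; exact nsmul_mem hx p
  have h := hf b hgb ⟨x, hx⟩ hbm
  have he : (⟨b • x, hbm⟩ : eigenSp Φ p (i : ℕ)) = p • ⟨x, hx⟩ := Subtype.ext hbx
  rw [he, map_nsmul, ← hfy, hby] at h
  have h3 : (p : ℂ) • (y : W) = 0 := by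
    rw [Nat.cast_smul_eq_nsmul]; simpa using h
  exact hy0 ((smul_eq_zero.1 h3).resolve_left (Nat.cast_ne_zero.2 hp0))
end

section
/- Let A be a unital associative algebra over ℂ and x ∈ A such that the commutator map ad x : a ↦ xa − ax is locally nilpotent on A (for every a ∈ A there is k with (ad x)^k(a) = 0). Let W be a left A-module generated by a single element w satisfying x·w = λ·w for some λ ∈ ℂ. Then for every v ∈ W there exists k ≥ 0 such that (x − λ·1)^k · v = 0. -/
/-- Let `x ∈ A` with `ad x` locally nilpotent on the `ℂ`-algebra `A`, and
let `W = A·w` be a cyclic `A`-module with `x·w = λ·w`. Then `x − λ·1` acts locally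
nilpotently on `W`. -/
theorem locally_nilpotent_action_on_whittaker_cyclic_module
    (A : Type*) [Ring A] [Algebra ℂ A] (x : A)
    (hx : ∀ a : A, ∃ k : ℕ, (fun b : A => x * b - b * x)^[k] a = 0)
    (W : Type*) [AddCommGroup W] [Module A W]
    (w : W) (hgen : Submodule.span A {w} = ⊤)
    (c : ℂ) (hw : x • w = algebraMap ℂ A c • w) :
    ∀ v : W, ∃ k : ℕ, ((x - algebraMap ℂ A c) ^ k) • v = 0 := by
  intro v
  have key : ∀ (k : ℕ) (a : A), ((x - algebraMap ℂ A c) ^ k) • (a • w)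
      = ((fun b : A => x * b - b * x)^[k] a) • w := by
    intro k
    induction k with
    | zero => intro a; simp
    | succ k ih =>
      intro a
      rw [Function.iterate_succ_apply, ← ih, pow_succ, mul_smul]
      congr 1
      rw [sub_smul, sub_smul, mul_smul, mul_smul, hw, ← mul_smul (algebraMap ℂ A c),
        Algebra.commutes, mul_smul a]
  have hv : v ∈ Submodule.span A {w} := hgen ▸ Submodule.mem_top
  obtain ⟨a, rfl⟩ := Submodule.mem_span_singleton.mp hv
  obtain ⟨k, hk⟩ := hx a
  exact ⟨k, by rw [key, hk, zero_smul]⟩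
end

section
/- Let L be a Lie algebra over ℂ and 𝔫 ⊆ L a Lie subalgebra such that for every x ∈ 𝔫 the map ad x is locally nilpotent on L. Let λ : 𝔫 → ℂ be a Whittaker function, i.e., a ℂ-linear map with λ(⁅x,y⁆) = 0 for all x, y ∈ 𝔫. Let W be a U(L)-module generated by a vector w satisfying ι(x)·w = λ(x)·w for all x ∈ 𝔫. Then for every x ∈ 𝔫 and every v ∈ W there exists k ≥ 0 such that (ι(x) − λ(x)·1)^k · v = 0. -/
section WhitAux
attribute [local instance 100] LieRing.ofAssociativeRing

open UniversalEnvelopingAlgebra in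
lemma whit_aux_step {L : Type*} [LieRing L] [LieAlgebra ℂ L]
    {W : Type*} [AddCommGroup W] [Module (UniversalEnvelopingAlgebra ℂ L) W]
    (x : L) (c : ℂ) : ∀ (m n k : ℕ) (y : L) (v : W), n + k = m →
      (fun z : L => ⁅x, z⁆)^[n] y = 0 →
      ((ι ℂ x - algebraMap ℂ (UniversalEnvelopingAlgebra ℂ L) c) ^ k) • v = 0 →
      ((ι ℂ x - algebraMap ℂ (UniversalEnvelopingAlgebra ℂ L) c) ^ m) • (ι ℂ y • v) = 0 := by
  intro m
  induction m with
  | zero =>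
    intro n k y v hm hy hv
    obtain ⟨rfl, rfl⟩ : n = 0 ∧ k = 0 := by omega
    have : v = 0 := by simpa only [pow_zero, one_smul] using hv
    rw [this, smul_zero, smul_zero]
  | succ m ih =>
    intro n k y v hm hy hv
    rcases n with _ | n
    · have h0 : y = 0 := hy
      rw [h0, map_zero, zero_smul, smul_zero]
    rcases k with _ | k
    · have : v = 0 := by simpa only [pow_zero, one_smul] using hv
      rw [this, smul_zero, smul_zero]
    have key : (ι ℂ x - algebraMap ℂ (UniversalEnvelopingAlgebra ℂ L) c) * ι ℂ y =
        ι ℂ ⁅x, y⁆ + ι ℂ y * (ι ℂ x - algebraMap ℂ (UniversalEnvelopingAlgebra ℂ L) c) := by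
      rw [LieHom.map_lie, LieRing.of_associative_ring_bracket, sub_mul, mul_sub,
        Algebra.commutes c (ι ℂ y)]
      abel
    rw [pow_succ, mul_smul, ← mul_smul _ (ι ℂ y) v, key, add_smul, mul_smul, smul_add,
      ih n (k + 1) ⁅x, y⁆ v (by omega) hy hv,
      ih (n + 1) k y _ (by omega) hy (by rw [← mul_smul, ← pow_succ]; exact hv), add_zero]

lemma whit_aux_induct {L : Type*} [LieRing L] [LieAlgebra ℂ L]
    (S : Subalgebra ℂ (UniversalEnvelopingAlgebra ℂ L))
    (h : ∀ y, UniversalEnvelopingAlgebra.ι ℂ y ∈ S) (u : UniversalEnvelopingAlgebra ℂ L) :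
    u ∈ S := by
  let f : L →ₗ⁅ℂ⁆ S :=
    { toFun := fun y => ⟨UniversalEnvelopingAlgebra.ι ℂ y, h y⟩
      map_add' := fun a b => Subtype.ext (map_add _ a b)
      map_smul' := fun a b => Subtype.ext (map_smul _ a b)
      map_lie' := fun {a b} => Subtype.ext (by
        simp only [LieHom.map_lie, LieRing.of_associative_ring_bracket]; rfl) }
  have e : S.val.comp (UniversalEnvelopingAlgebra.lift ℂ f) = AlgHom.id ℂ _ := by
    apply UniversalEnvelopingAlgebra.hom_ext
    ext y
    change ((UniversalEnvelopingAlgebra.lift ℂ f (UniversalEnvelopingAlgebra.ι ℂ y) : S) :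
      UniversalEnvelopingAlgebra ℂ L) = UniversalEnvelopingAlgebra.ι ℂ y
    rw [UniversalEnvelopingAlgebra.lift_ι_apply]
    rfl
  have := DFunLike.congr_fun e u
  rw [AlgHom.id_apply] at this
  rw [← this]
  exact (UniversalEnvelopingAlgebra.lift ℂ f u).2

end WhitAux

/-- Let `𝔫 ⊆ L` be a Lie subalgebra acting ad-locally-nilpotently on `L`,
`λ : 𝔫 → ℂ` a Whittaker function, and `W` a Whittaker `U(L)`-module of type `λ` (generated
by `w` with `ι(x)·w = λ(x)·w` for `x ∈ 𝔫`). Then for every `x ∈ 𝔫`, the operator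
`ι(x) − λ(x)·1` acts locally nilpotently on `W`. -/
theorem whittaker_module_locally_nilpotent_description
    (L : Type*) [LieRing L] [LieAlgebra ℂ L]
    (N : LieSubalgebra ℂ L)
    (hnil : ∀ x : N, ∀ y : L, ∃ k : ℕ, (fun z : L => ⁅(x : L), z⁆)^[k] y = 0)
    (lam : N →ₗ[ℂ] ℂ) (hlam : ∀ x y : N, lam ⁅x, y⁆ = 0)
    (W : Type*) [AddCommGroup W] [Module (UniversalEnvelopingAlgebra ℂ L) W]
    (w : W) (hgen : Submodule.span (UniversalEnvelopingAlgebra ℂ L) {w} = ⊤)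
    (hw : ∀ x : N, UniversalEnvelopingAlgebra.ι ℂ (x : L) • w =
      algebraMap ℂ (UniversalEnvelopingAlgebra ℂ L) (lam x) • w) :
    ∀ x : N, ∀ v : W, ∃ k : ℕ,
      ((UniversalEnvelopingAlgebra.ι ℂ (x : L) -
        algebraMap ℂ (UniversalEnvelopingAlgebra ℂ L) (lam x)) ^ k) • v = 0 := by
  intro x v
  set a := UniversalEnvelopingAlgebra.ι ℂ (x : L) -
        algebraMap ℂ (UniversalEnvelopingAlgebra ℂ L) (lam x) with ha
  have mono : ∀ (v : W) (k l : ℕ), k ≤ l → a ^ k • v = 0 → a ^ l • v = 0 := by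
    intro v k l hkl h
    obtain ⟨d, rfl⟩ := Nat.exists_eq_add_of_le' hkl
    rw [pow_add, mul_smul, h, smul_zero]
  let S : Subalgebra ℂ (UniversalEnvelopingAlgebra ℂ L) :=
    { carrier := {u | ∀ v : W, (∃ k : ℕ, a ^ k • v = 0) → ∃ k : ℕ, a ^ k • (u • v) = 0}
      mul_mem' := by
        intro p q hp hq v hv
        rw [mul_smul]
        exact hp _ (hq _ hv)
      add_mem' := by
        intro p q hp hq v hv
        obtain ⟨k, hk⟩ := hp v hv
        obtain ⟨l, hl⟩ := hq v hv
        refine ⟨max k l, ?_⟩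
        rw [add_smul, smul_add, mono _ _ _ (le_max_left k l) hk,
          mono _ _ _ (le_max_right k l) hl, add_zero]
      algebraMap_mem' := by
        rintro r v ⟨k, hk⟩
        refine ⟨k, ?_⟩
        rw [← mul_smul, ← Algebra.commutes, mul_smul, hk, smul_zero] }
  have hS := whit_aux_induct S (by
    rintro y v ⟨k, hk⟩
    obtain ⟨n, hn⟩ := hnil x y
    exact ⟨n + k, whit_aux_step (x : L) (lam x) (n + k) n k y v rfl hn hk⟩)
  have hv : v ∈ Submodule.span (UniversalEnvelopingAlgebra ℂ L) {w} := by
    rw [hgen]; trivial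
  obtain ⟨u, rfl⟩ := Submodule.mem_span_singleton.1 hv
  exact hS u w ⟨1, by rw [pow_one, ha, sub_smul, hw, sub_self]⟩
end

section
/- Let L be a Lie algebra over ℂ and 𝔫 ⊆ L a Lie subalgebra such that for every x ∈ 𝔫 the map ad x is locally nilpotent on L. Let λ, μ : 𝔫 → ℂ be Whittaker functions with λ ≠ μ (there is x₀ ∈ 𝔫 with λ(x₀) ≠ μ(x₀)). Let W_λ be a simple U(L)-module that is a Whittaker module of type λ, and W_μ a simple U(L)-module that is a Whittaker module of type μ. Then W_λ and W_μ are not isomorphic as U(L)-modules. -/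
theorem nilp_mul_aux {U : Type*} [Ring U] (D : U →+ U)
    (hD : ∀ a b, D (a * b) = D a * b + a * D b) (n : ℕ) :
    ∀ j k : ℕ, j + k ≤ n → ∀ a b : U, D^[j] a = 0 → D^[k] b = 0 → ∃ m, D^[m] (a * b) = 0 := by
  induction n with
  | zero =>
    intro j k hjk a b ha hb
    obtain rfl : j = 0 := by omega
    exact ⟨0, by simp_all⟩
  | succ n ih =>
    intro j k hjk a b ha hb
    rcases j with _ | j
    · exact ⟨0, by simp_all⟩
    rcases k with _ | k
    · exact ⟨0, by simp_all⟩
    obtain ⟨p, hp⟩ := ih j (k+1) (by omega) (D a) b (by simpa using ha) hb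
    obtain ⟨q, hq⟩ := ih (j+1) k (by omega) a (D b) ha (by simpa using hb)
    refine ⟨p + q + 1, ?_⟩
    rw [Function.iterate_succ_apply, hD, iterate_map_add, add_comm p q,
      Function.iterate_add_apply, hp, add_comm q p, Function.iterate_add_apply, hq,
      iterate_map_zero, iterate_map_zero, add_zero]

section
attribute [local instance 100] LieRing.ofAssociativeRing

theorem uea_nilp {L : Type*} [LieRing L] [LieAlgebra ℂ L] (x : L)
    (h : ∀ y : L, ∃ k : ℕ, (fun z : L => ⁅x, z⁆)^[k] y = 0)
    (D : UniversalEnvelopingAlgebra ℂ L →ₗ[ℂ] UniversalEnvelopingAlgebra ℂ L)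
    (hDX : ∀ a, D a = UniversalEnvelopingAlgebra.ι ℂ x * a - a * UniversalEnvelopingAlgebra.ι ℂ x)
    (a : UniversalEnvelopingAlgebra ℂ L) : ∃ m, D^[m] a = 0 := by
  have hD : ∀ a b, D (a * b) = D a * b + a * D b := by
    intro a b; rw [hDX, hDX, hDX]; noncomm_ring
  let S : Subalgebra ℂ (UniversalEnvelopingAlgebra ℂ L) :=
    { carrier := {a | ∃ m, D^[m] a = 0}
      mul_mem' := by
        rintro a b ⟨j, hj⟩ ⟨k, hk⟩
        exact nilp_mul_aux D.toAddMonoidHom hD _ j k le_rfl a b hj hk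
      add_mem' := by
        rintro a b ⟨j, hj⟩ ⟨k, hk⟩
        refine ⟨j + k, ?_⟩
        rw [iterate_map_add, add_comm j k, Function.iterate_add_apply, hj, add_comm k j,
          Function.iterate_add_apply, hk, iterate_map_zero, iterate_map_zero, add_zero]
      algebraMap_mem' := by
        intro r
        refine ⟨1, ?_⟩
        simp [hDX, Algebra.commutes] }
  have hι : ∀ y, UniversalEnvelopingAlgebra.ι ℂ y ∈ S := by
    intro y
    obtain ⟨k, hk⟩ := h y
    refine ⟨k, ?_⟩
    have : ∀ k y, D^[k] (UniversalEnvelopingAlgebra.ι ℂ y) =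
        UniversalEnvelopingAlgebra.ι ℂ ((fun z : L => ⁅x, z⁆)^[k] y) := by
      intro k
      induction k with
      | zero => intro y; rfl
      | succ k ih =>
        intro y
        rw [Function.iterate_succ_apply, Function.iterate_succ_apply, ← ih, LieHom.map_lie,
          hDX, LieRing.of_associative_ring_bracket]
    rw [this, hk, map_zero]
  let f : L →ₗ⁅ℂ⁆ S :=
    { toFun := fun y => ⟨UniversalEnvelopingAlgebra.ι ℂ y, hι y⟩
      map_add' := by intro a b; ext; simp
      map_smul' := by intro a b; ext; simp
      map_lie' := by
        intro a b; ext
        simp [LieRing.of_associative_ring_bracket] }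
  have hid : S.val.comp (UniversalEnvelopingAlgebra.lift ℂ f) = AlgHom.id ℂ _ := by
    apply UniversalEnvelopingAlgebra.hom_ext
    ext y
    simp [f]
  have := (UniversalEnvelopingAlgebra.lift ℂ f a).2
  have h2 : (UniversalEnvelopingAlgebra.lift ℂ f a : UniversalEnvelopingAlgebra ℂ L) = a :=
    DFunLike.congr_fun hid a
  rw [h2] at this
  exact this

end

/-- Simple Whittaker `U(L)`-modules of distinct Whittaker types `λ ≠ μ`
(for a Lie subalgebra `𝔫 ⊆ L` acting ad-locally-nilpotently on `L`) are non-isomorphic. -/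
theorem whittaker_modules_of_distinct_type_nonisomorphic
    (L : Type*) [LieRing L] [LieAlgebra ℂ L]
    (N : LieSubalgebra ℂ L)
    (hnil : ∀ x : N, ∀ y : L, ∃ k : ℕ, (fun z : L => ⁅(x : L), z⁆)^[k] y = 0)
    (lam mu : N →ₗ[ℂ] ℂ)
    (hlam : ∀ x y : N, lam ⁅x, y⁆ = 0) (hmu : ∀ x y : N, mu ⁅x, y⁆ = 0)
    (hne : lam ≠ mu)
    (W₁ : Type*) [AddCommGroup W₁] [Module (UniversalEnvelopingAlgebra ℂ L) W₁]
    (W₂ : Type*) [AddCommGroup W₂] [Module (UniversalEnvelopingAlgebra ℂ L) W₂]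
    (h₁ : IsSimpleModule (UniversalEnvelopingAlgebra ℂ L) W₁)
    (h₂ : IsSimpleModule (UniversalEnvelopingAlgebra ℂ L) W₂)
    (w₁ : W₁) (hgen₁ : Submodule.span (UniversalEnvelopingAlgebra ℂ L) {w₁} = ⊤)
    (hw₁ : ∀ x : N, UniversalEnvelopingAlgebra.ι ℂ (x : L) • w₁ =
      algebraMap ℂ (UniversalEnvelopingAlgebra ℂ L) (lam x) • w₁)
    (w₂ : W₂) (hgen₂ : Submodule.span (UniversalEnvelopingAlgebra ℂ L) {w₂} = ⊤)
    (hw₂ : ∀ x : N, UniversalEnvelopingAlgebra.ι ℂ (x : L) • w₂ =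
      algebraMap ℂ (UniversalEnvelopingAlgebra ℂ L) (mu x) • w₂) :
    IsEmpty (W₁ ≃ₗ[UniversalEnvelopingAlgebra ℂ L] W₂) := by
  refine ⟨fun e => ?_⟩
  obtain ⟨x, hx⟩ : ∃ x, lam x ≠ mu x := by
    by_contra! hc
    exact hne (LinearMap.ext hc)
  set X := UniversalEnvelopingAlgebra.ι ℂ (x : L) with hX
  let D : UniversalEnvelopingAlgebra ℂ L →ₗ[ℂ] UniversalEnvelopingAlgebra ℂ L :=
    LinearMap.mulLeft ℂ X - LinearMap.mulRight ℂ X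
  have hDX : ∀ a, D a = X * a - a * X := fun a => rfl
  have hv : e.symm w₂ ∈ Submodule.span (UniversalEnvelopingAlgebra ℂ L) {w₁} := by
    rw [hgen₁]; trivial
  obtain ⟨a, ha⟩ := Submodule.mem_span_singleton.1 hv
  obtain ⟨m, hm⟩ := uea_nilp (x : L) (hnil x) D hDX a
  have key : X • a • w₁ = algebraMap ℂ (UniversalEnvelopingAlgebra ℂ L) (mu x) • a • w₁ := by
    rw [ha, ← map_smul, ← map_smul, hX, hw₂ x]
  have hstep : ∀ b : UniversalEnvelopingAlgebra ℂ L,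
      X • b • w₁ = algebraMap ℂ (UniversalEnvelopingAlgebra ℂ L) (mu x) • b • w₁ →
      D b • w₁ = algebraMap ℂ (UniversalEnvelopingAlgebra ℂ L) (mu x - lam x) • b • w₁ := by
    intro b hb
    rw [hDX, sub_smul, mul_smul, mul_smul, hb, hX, hw₁ x, map_sub, sub_smul, ← mul_smul b,
      ← Algebra.commutes, mul_smul]
  have hiter : ∀ k : ℕ, D^[k] a • w₁ =
      algebraMap ℂ (UniversalEnvelopingAlgebra ℂ L) ((mu x - lam x) ^ k) • a • w₁ := by
    intro k
    induction k with
    | zero => simp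
    | succ k ih =>
      rw [Function.iterate_succ_apply', hstep, ih, ← mul_smul, ← map_mul, pow_succ']
      rw [ih, ← mul_smul X, ← Algebra.commutes, mul_smul, key,
        ← mul_smul _ _ (a • w₁), ← mul_smul _ _ (a • w₁), Algebra.commutes]
  have h0 := hiter m
  rw [hm, zero_smul] at h0
  have hz : a • w₁ = 0 := by
    have hc : (mu x - lam x) ^ m ≠ 0 := pow_ne_zero _ (sub_ne_zero.2 hx.symm)
    have h3 := congrArg
      (fun t => algebraMap ℂ (UniversalEnvelopingAlgebra ℂ L) (((mu x - lam x) ^ m)⁻¹) • t) h0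
    simp only [smul_zero] at h3
    rw [← mul_smul, ← map_mul, inv_mul_cancel₀ hc, map_one, one_smul] at h3
    exact h3.symm
  rw [hz] at ha
  have hw0 : w₂ = 0 := by
    rw [← e.apply_symm_apply w₂, ← ha, map_zero]
  have := IsSimpleModule.nontrivial (UniversalEnvelopingAlgebra ℂ L) W₂
  rw [hw0, Submodule.span_zero_singleton] at hgen₂
  exact bot_ne_top hgen₂
end

section
/- Let L be a Lie algebra over ℂ and 𝔫 ⊆ L a Lie subalgebra such that for every x ∈ 𝔫 the map ad x is locally nilpotent on L. Let λ₁, …, λ_t : 𝔫 → ℂ be pairwise distinct Whittaker functions, and for each i let W_i be a simple U(L)-module that is a Whittaker module of type λ_i. Then for any choice of nonzero elements w_i ∈ W_i, the element (w₁, …, w_t) generates the direct sum W₁ ⊕ ⋯ ⊕ W_t as a U(L)-module. -/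
attribute [local instance] LieRing.ofAssociativeRing LieAlgebra.ofAssociativeAlgebra in
open UniversalEnvelopingAlgebra in
theorem whit_uea_top (L : Type*) [LieRing L] [LieAlgebra ℂ L]
    (T : Subalgebra ℂ (UniversalEnvelopingAlgebra ℂ L))
    (hT : ∀ y : L, ι ℂ y ∈ T) (u : UniversalEnvelopingAlgebra ℂ L) : u ∈ T := by
  let f : L →ₗ⁅ℂ⁆ T :=
    { toFun := fun y => ⟨ι ℂ y, hT y⟩
      map_add' := fun a b => by ext; simp
      map_smul' := fun a b => by ext; simp
      map_lie' := fun {a b} => by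
        ext
        simp [LieRing.of_associative_ring_bracket] }
  have h : T.val.comp (lift ℂ f) = AlgHom.id ℂ _ := by
    ext y
    simp [f]
  have := DFunLike.congr_fun h u
  simp only [AlgHom.comp_apply, AlgHom.id_apply] at this
  rw [← this]
  exact (lift ℂ f u).2

attribute [local instance] LieRing.ofAssociativeRing LieAlgebra.ofAssociativeAlgebra in
open UniversalEnvelopingAlgebra in
theorem whit_step (L : Type*) [LieRing L] [LieAlgebra ℂ L] (W : Type*) [AddCommGroup W]
    [Module (UniversalEnvelopingAlgebra ℂ L) W] (x : L) (c : ℂ) (n : ℕ) :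
    ∀ (k m : ℕ) (y : L) (w : W), k + m = n → (fun z : L => ⁅x, z⁆)^[k] y = 0 →
    (ι ℂ x - algebraMap ℂ (UniversalEnvelopingAlgebra ℂ L) c) ^ m • w = 0 →
    (ι ℂ x - algebraMap ℂ (UniversalEnvelopingAlgebra ℂ L) c) ^ n • (ι ℂ y • w) = 0 := by
  induction n with
  | zero =>
    intro k m y w h hk hm
    obtain ⟨rfl, rfl⟩ : k = 0 ∧ m = 0 := by omega
    simp at hk
    simp [hk]
  | succ n ih =>
    intro k m y w h hk hm
    rcases k with _ | k
    · simp at hk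
      simp [hk]
    rcases m with _ | m
    · simp at hm
      simp [hm]
    have e : (ι ℂ x - algebraMap ℂ (UniversalEnvelopingAlgebra ℂ L) c) • (ι ℂ y • w)
        = ι ℂ ⁅x, y⁆ • w +
          ι ℂ y • ((ι ℂ x - algebraMap ℂ (UniversalEnvelopingAlgebra ℂ L) c) • w) := by
      simp only [← mul_smul, ← add_smul]
      congr 1
      rw [LieHom.map_lie, LieRing.of_associative_ring_bracket, sub_mul, mul_sub,
        Algebra.commutes c (ι ℂ y)]
      abel
    rw [pow_succ, mul_smul, e, smul_add, ih k (m + 1) _ _ (by omega) (by simpa using hk) hm,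
      ih (k + 1) m _ _ (by omega) hk (by rwa [← mul_smul, ← pow_succ]), add_zero]

attribute [local instance] LieRing.ofAssociativeRing LieAlgebra.ofAssociativeAlgebra in
open UniversalEnvelopingAlgebra in
theorem whit_locnil (L : Type*) [LieRing L] [LieAlgebra ℂ L] (W : Type*) [AddCommGroup W]
    [Module (UniversalEnvelopingAlgebra ℂ L) W] (x : L) (c : ℂ)
    (hx : ∀ y : L, ∃ k : ℕ, (fun z : L => ⁅x, z⁆)^[k] y = 0) (v : W)
    (hgen : Submodule.span (UniversalEnvelopingAlgebra ℂ L) {v} = ⊤)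
    (hv : ι ℂ x • v = algebraMap ℂ (UniversalEnvelopingAlgebra ℂ L) c • v) (w : W) :
    ∃ k : ℕ, (ι ℂ x - algebraMap ℂ (UniversalEnvelopingAlgebra ℂ L) c) ^ k • w = 0 := by
  let T : Subalgebra ℂ (UniversalEnvelopingAlgebra ℂ L) :=
    { carrier := {u | ∀ w : W,
        (∃ k : ℕ, (ι ℂ x - algebraMap ℂ (UniversalEnvelopingAlgebra ℂ L) c) ^ k • w = 0) →
        (∃ k : ℕ, (ι ℂ x - algebraMap ℂ (UniversalEnvelopingAlgebra ℂ L) c) ^ k • (u • w) = 0)}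
      mul_mem' := fun {a b} ha hb w h => by
        rw [mul_smul]
        exact ha _ (hb _ h)
      add_mem' := fun {a b} ha hb w h => by
        obtain ⟨k, hk⟩ := ha w h
        obtain ⟨m, hm⟩ := hb w h
        refine ⟨k + m, ?_⟩
        rw [add_smul, smul_add]
        nth_rewrite 1 [add_comm k m]
        rw [pow_add, pow_add, mul_smul, mul_smul, hk, hm]
        simp
      algebraMap_mem' := fun r w h => by
        obtain ⟨k, hk⟩ := h
        refine ⟨k, ?_⟩
        rw [← mul_smul, ← Algebra.commutes r, mul_smul, hk, smul_zero] }
  obtain ⟨u, rfl⟩ := Submodule.mem_span_singleton.1 (hgen ▸ Submodule.mem_top : w ∈ _)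
  refine whit_uea_top L T (fun y w h => ?_) u v ⟨1, by rw [pow_one, sub_smul, hv, sub_self]⟩
  obtain ⟨m, hm⟩ := h
  obtain ⟨k, hk⟩ := hx y
  exact ⟨k + m, whit_step L W x c _ k m y w rfl hk hm⟩

attribute [local instance] LieRing.ofAssociativeRing LieAlgebra.ofAssociativeAlgebra in
open UniversalEnvelopingAlgebra in
theorem whit_inj (L : Type*) [LieRing L] [LieAlgebra ℂ L] (W : Type*) [AddCommGroup W]
    [Module (UniversalEnvelopingAlgebra ℂ L) W] (x : L) (c d : ℂ) (hcd : c ≠ d)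
    (hl : ∀ w : W, ∃ k : ℕ,
      (ι ℂ x - algebraMap ℂ (UniversalEnvelopingAlgebra ℂ L) c) ^ k • w = 0)
    (n : ℕ) (w : W) (hw : w ≠ 0) :
    (ι ℂ x - algebraMap ℂ (UniversalEnvelopingAlgebra ℂ L) d) ^ n • w ≠ 0 := by
  induction n with
  | zero => simpa using hw
  | succ n ih =>
    rw [pow_succ', mul_smul]
    generalize (ι ℂ x - algebraMap ℂ (UniversalEnvelopingAlgebra ℂ L) d) ^ n • w = z at ih
    intro h
    obtain ⟨k, hk⟩ := hl z
    have h1 : (ι ℂ x - algebraMap ℂ (UniversalEnvelopingAlgebra ℂ L) c) • z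
        = algebraMap ℂ (UniversalEnvelopingAlgebra ℂ L) (d - c) • z := by
      rw [sub_smul, sub_eq_zero] at h
      rw [sub_smul, h, map_sub, sub_smul]
    have h2 : ∀ k : ℕ, (ι ℂ x - algebraMap ℂ (UniversalEnvelopingAlgebra ℂ L) c) ^ k • z
        = algebraMap ℂ (UniversalEnvelopingAlgebra ℂ L) ((d - c) ^ k) • z := by
      intro k
      induction k with
      | zero => simp
      | succ k ihk =>
        rw [pow_succ', mul_smul, ihk, ← mul_smul, ← Algebra.commutes, mul_smul, h1,
          ← mul_smul, ← map_mul, ← pow_succ]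
    rw [h2] at hk
    apply ih
    have h3 : (d - c) ^ k ≠ 0 := pow_ne_zero _ (sub_ne_zero.2 hcd.symm)
    have h4 := congrArg
      (fun q => algebraMap ℂ (UniversalEnvelopingAlgebra ℂ L) ((d - c) ^ k)⁻¹ • q) hk
    simp only [← mul_smul, ← map_mul, inv_mul_cancel₀ h3, map_one, one_smul, smul_zero] at h4
    exact h4

/-- For pairwise distinct Whittaker functions `λ₁, …, λ_t` on a Lie
subalgebra `𝔫 ⊆ L` acting ad-locally-nilpotently on `L`, and simple Whittaker
`U(L)`-modules `W_i` of type `λ_i`, any tuple of nonzero vectors `(w₁, …, w_t)` generates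
the direct sum `W₁ ⊕ ⋯ ⊕ W_t` as a `U(L)`-module. -/
theorem cyclic_vector_in_direct_sum_of_whittaker_modules
    (L : Type*) [LieRing L] [LieAlgebra ℂ L]
    (N : LieSubalgebra ℂ L)
    (hnil : ∀ x : N, ∀ y : L, ∃ k : ℕ, (fun z : L => ⁅(x : L), z⁆)^[k] y = 0)
    (t : ℕ) (lam : Fin t → (N →ₗ[ℂ] ℂ))
    (hlam : ∀ i, ∀ x y : N, lam i ⁅x, y⁆ = 0)
    (hdist : ∀ i j, i ≠ j → lam i ≠ lam j)
    (W : Fin t → Type*) [∀ i, AddCommGroup (W i)]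
    [∀ i, Module (UniversalEnvelopingAlgebra ℂ L) (W i)]
    (hsimple : ∀ i, IsSimpleModule (UniversalEnvelopingAlgebra ℂ L) (W i))
    (v : ∀ i, W i)
    (hgen : ∀ i, Submodule.span (UniversalEnvelopingAlgebra ℂ L) {v i} = ⊤)
    (hv : ∀ i, ∀ x : N, UniversalEnvelopingAlgebra.ι ℂ (x : L) • v i =
      algebraMap ℂ (UniversalEnvelopingAlgebra ℂ L) (lam i x) • v i)
    (w : ∀ i, W i) (hw : ∀ i, w i ≠ 0) :
    Submodule.span (UniversalEnvelopingAlgebra ℂ L) {w} = ⊤ := by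
  classical
  have hl : ∀ i, ∀ x : N, ∀ z : W i, ∃ k : ℕ, (UniversalEnvelopingAlgebra.ι ℂ (x : L) -
      algebraMap ℂ (UniversalEnvelopingAlgebra ℂ L) (lam i x)) ^ k • z = 0 := fun i x z =>
    whit_locnil L (W i) x (lam i x) (hnil x) (v i) (hgen i) (hv i x) z
  have key : ∀ i, ∀ s : Finset (Fin t), i ∉ s → ∃ u : UniversalEnvelopingAlgebra ℂ L,
      u • w i ≠ 0 ∧ ∀ j ∈ s, u • w j = 0 := by
    intro i s
    induction s using Finset.induction_on with
    | empty => exact fun _ => ⟨1, by simpa using hw i, by simp⟩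
    | insert j s hj ih =>
      intro hi
      rw [Finset.mem_insert, not_or] at hi
      obtain ⟨u, hu, hus⟩ := ih hi.2
      obtain ⟨x, hx⟩ : ∃ x, lam i x ≠ lam j x := by
        by_contra hc
        push Not at hc
        exact hdist i j hi.1 (LinearMap.ext hc)
      obtain ⟨k, hk⟩ := hl j x (u • w j)
      refine ⟨(UniversalEnvelopingAlgebra.ι ℂ (x : L) -
        algebraMap ℂ (UniversalEnvelopingAlgebra ℂ L) (lam j x)) ^ k * u, ?_, ?_⟩
      · rw [mul_smul]
        exact whit_inj L (W i) x _ _ hx (hl i x) k _ hu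
      · intro l hls
        rw [mul_smul]
        rcases Finset.mem_insert.1 hls with rfl | hls
        · exact hk
        · rw [hus l hls, smul_zero]
  rw [eq_top_iff]
  intro z _
  have hz : z = ∑ i, Pi.single i (z i) := (Finset.univ_sum_single z).symm
  rw [hz]
  refine Submodule.sum_mem _ fun i _ => ?_
  obtain ⟨u, hu, hus⟩ := key i (Finset.univ.erase i) (by simp)
  have := hsimple i
  obtain ⟨r, hr⟩ := IsSimpleModule.toSpanSingleton_surjective
    (UniversalEnvelopingAlgebra ℂ L) hu (z i)
  rw [LinearMap.toSpanSingleton_apply] at hr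
  refine Submodule.mem_span_singleton.2 ⟨r * u, ?_⟩
  ext j
  rw [Pi.smul_apply, mul_smul]
  by_cases hij : j = i
  · subst hij
    rw [Pi.single_eq_same, hr]
  · rw [Pi.single_eq_of_ne hij, hus j (by simp [hij]), smul_zero]
end
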